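/- A function $g$ on $\mathbb R^2$ is of *standard form* on an open neighborhood $U$ of the origin if $g=\chi_E\prod_{j=1}^n|f_j|^{\gamma_j}$, where the $f_j$ are real analytic on $U$ and not identically zero near the origin, the $\gamma_j$ are real, $g$ is integrable on $U$, and $E$ is either a disk centered at $0$ or a finite disjoint union of open regions, each of which is one of the two regions into which a disk $x^2+y^2<r^2$ is cut by two curves joining the origin to the circle $x^2+y^2=r^2$; each curve is an arc of one half of a graph $y=h(|x|^{1/N})$ or $x=h(|y|^{1/N})$ with $h$ real analytic, $h(0)=0$, and all the curves are pairwise disjoint away from the origin. For a unit vector $v=(v_1,v_2)$ and $v^\perp=(v_2,-v_1)$, a number $\delta_v>0$ is the *strip exponent* of $g$ in direction $v$ if for some $e_v\in\{0,1\}$ and each sufficiently small $c'>0$, the integral $\int_{\{|(x,y)\cdot v|<r,\ |(x,y)\cdot v^\perp|<c'\}}g\,dx\,dy$ is bounded above and below by positive constant multiples (depending on $c'$) of $r^{\delta_v}|\ln r|^{e_v}$ for $0<r<c'$. Suppose $m=\sum_{i=1}^K m_i$, where each $m_i$ is compactly supported and nonnegative, and for some point $(x_i,y_i)$ and some open neighborhood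 $U_i$ of the origin with $\operatorname{supp} m_i\subset (x_i,y_i)+U_i$ one has $m_i(x_i+x,y_i+y)=\alpha_i(x,y)g_i(x,y)$ for almost all $(x,y)\in U_i$. Here $g_i$ is of standard form on $U_i$ with set $E_i$, and $\alpha_i$ is $C^1$ on $U_i\setminus\{0\}$ and satisfies there, for a constant $A$, $|\alpha_i|\le A$ and $|\nabla\alpha_i(x,y)|\le A(x^2+y^2)^{-1/2}$. Let $K(t,u)=\int_{\mathbb R^2}m(x,y)e^{i(tx+uy)}\,dx\,dy$. Fix an index $i_0$ such that for some $c>0$ one has $\alpha_{i_0}>c$ at all points of $E_{i_0}\setminus\{0\}$ sufficiently close to the origin. Let $v$ be a unit vector such that the strip exponent $\delta_v$ of $g_{i_0}$ in direction $v$ satisfies $\delta_v<1$, let $l$ be the line through the origin in direction $v$, let $H>0$, and let $l_H$ be the set of points of $\mathbb R^2$ within distance $H$ of $l$. Then for any $\delta>\delta_v$ there is no constant $C$ with $|K(t,u)|\le C(2+|(t,u)|)^{-\delta}$ for all $(t,u)\in l_H$; that is, a sharp directional estimate for one summand remains sharp for the sum. -/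

import Mathlib

open MeasureTheory Set Filter
open scoped Topology

noncomputable section

/-- The Euclidean magnitude `|(x,y)| = √(x²+y²)` (the norm of `ℝ × ℝ` in Mathlib is the sup norm). -/
def nrm2 (p : ℝ × ℝ) : ℝ := Real.sqrt (p.1 ^ 2 + p.2 ^ 2)

/-- The open Euclidean disk `{(x,y) : x²+y² < r²}` centered at the origin. -/
def disk2 (r : ℝ) : Set (ℝ × ℝ) := {p : ℝ × ℝ | p.1 ^ 2 + p.2 ^ 2 < r ^ 2}

/-- The circle `{(x,y) : x²+y² = r²}` centered at the origin. -/
def circle2 (r : ℝ) : Set (ℝ × ℝ) := {p : ℝ × ℝ | p.1 ^ 2 + p.2 ^ 2 = r ^ 2}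

/-- Dot product on `ℝ²`. -/
def dot2 (p q : ℝ × ℝ) : ℝ := p.1 * q.1 + p.2 * q.2

/-- The perpendicular vector `v^⊥ = (v₂, −v₁)`. -/
def perp2 (v : ℝ × ℝ) : ℝ × ℝ := (v.2, -v.1)

/-- The function `g = χ_E · ∏ⱼ |fⱼ|^(γⱼ)`. -/
def stdFun (n : ℕ) (f : Fin n → ℝ × ℝ → ℝ) (γ : Fin n → ℝ) (E : Set (ℝ × ℝ)) :
    ℝ × ℝ → ℝ :=
  E.indicator fun p => ∏ j, |f j p| ^ (γ j)

/-- A boundary curve: an arc of one half (`σ = 1` or `σ = -1`) of a graph `y = h(|x|^{1/N})` or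
`x = h(|y|^{1/N})`, with `h` real analytic and `h 0 = 0`, which starts at the origin, stays in the
open disk of radius `r`, and ends on the circle of radius `r`. -/
def IsPuiseuxArc (r : ℝ) (C : Set (ℝ × ℝ)) : Prop :=
  ∃ (N : ℕ) (h : ℝ → ℝ) (σ b : ℝ),
    0 < N ∧ (σ = 1 ∨ σ = -1) ∧ 0 < b ∧
    AnalyticOnNhd ℝ h (Icc 0 (b ^ ((N : ℝ)⁻¹))) ∧ h 0 = 0 ∧
    (∀ s, 0 ≤ s → s < b → (s, h (s ^ ((N : ℝ)⁻¹))) ∈ disk2 r) ∧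
    (b, h (b ^ ((N : ℝ)⁻¹))) ∈ circle2 r ∧
    (C = (fun s : ℝ => (σ * s, h (s ^ ((N : ℝ)⁻¹)))) '' Icc 0 b ∨
     C = (fun s : ℝ => (h (s ^ ((N : ℝ)⁻¹)), σ * s)) '' Icc 0 b)

/-- `R` is one of the regions into which two curves `C₁`, `C₂` cut the open disk of radius `r`:
an open connected subset of the disk minus the curves whose boundary lies on the two curves and
the circle. -/
def IsRegionBetween (r : ℝ) (C₁ C₂ R : Set (ℝ × ℝ)) : Prop :=
  IsOpen R ∧ IsConnected R ∧ R ⊆ disk2 r \ (C₁ ∪ C₂) ∧ frontier R ⊆ C₁ ∪ C₂ ∪ circle2 r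

/-- The admissible sets `E`: a disk centered at the origin, or a finite disjoint union of regions
each bounded by two Puiseux arcs joining the origin to a fixed circle and by that circle, where
all the arcs are pairwise disjoint except for their common starting point, the origin. -/
def IsStdDomain (E : Set (ℝ × ℝ)) : Prop :=
  (∃ r > (0 : ℝ), E = disk2 r) ∨
  (∃ r > (0 : ℝ), ∃ m : ℕ, 0 < m ∧
    ∃ (R : Fin m → Set (ℝ × ℝ)) (C : Fin m × Fin 2 → Set (ℝ × ℝ)),
      E = ⋃ i, R i ∧
      (Pairwise fun i j => Disjoint (R i) (R j)) ∧
      (∀ q, IsPuiseuxArc r (C q)) ∧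
      (Pairwise fun q q' => Disjoint (C q \ {0}) (C q' \ {0})) ∧
      (∀ i, IsRegionBetween r (C (i, 0)) (C (i, 1)) (R i)))

/-- `g = χ_E ∏ |fⱼ|^(γⱼ)` is of the standard form on the open neighborhood `U` of the origin:
the `fⱼ` are real analytic on `U`, none vanishes identically near the origin, `E` is an
admissible set, and `g` is integrable on `U`. -/
structure StandardFormOn (U : Set (ℝ × ℝ)) (n : ℕ) (f : Fin n → ℝ × ℝ → ℝ) (γ : Fin n → ℝ)
    (E : Set (ℝ × ℝ)) : Prop where
  isOpen : IsOpen U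
  zero_mem : (0 : ℝ × ℝ) ∈ U
  analytic : ∀ j, AnalyticOnNhd ℝ (f j) U
  nontriv : ∀ j, ¬ ∀ᶠ p in 𝓝 (0 : ℝ × ℝ), f j p = 0
  domain : IsStdDomain E
  integrable : IntegrableOn (stdFun n f γ E) U

/-- The Euclidean length `|∇α(p)|` of the gradient. -/
def gradNorm (α : ℝ × ℝ → ℝ) (p : ℝ × ℝ) : ℝ :=
  nrm2 (fderiv ℝ α p (1, 0), fderiv ℝ α p (0, 1))

/-- On `U` and away from the origin, `α` is `C¹`, `|α| ≤ A` and `|∇α| ≤ A (x²+y²)^{-1/2}`. -/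
def AlphaBoundOn (U : Set (ℝ × ℝ)) (α : ℝ × ℝ → ℝ) (A : ℝ) : Prop :=
  ContDiffOn ℝ 1 α (U \ {0}) ∧
    ∀ p ∈ U \ {0}, |α p| ≤ A ∧ gradNorm α p ≤ A * (nrm2 p)⁻¹

/-- The strip `{(x,y) : |(x,y)·v| < r, |(x,y)·v^⊥| < c}`. -/
def strip2 (v : ℝ × ℝ) (r c : ℝ) : Set (ℝ × ℝ) :=
  {p : ℝ × ℝ | |dot2 p v| < r ∧ |dot2 p (perp2 v)| < c}

/-- `δ` is the strip exponent of `g` in the direction `v`, with logarithmic exponent `e ∈ {0,1}`: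
for every small `c`, `∫_{strip2 v r c} g` is comparable to `r^δ |ln r|^e` for `0 < r < c`. -/
def IsStripExponent (g : ℝ × ℝ → ℝ) (v : ℝ × ℝ) (δ : ℝ) (e : ℕ) : Prop :=
  0 < δ ∧ e ≤ 1 ∧ ∃ cv > (0 : ℝ), ∀ c : ℝ, 0 < c → c < cv →
    ∃ a > (0 : ℝ), ∃ b > (0 : ℝ), ∀ r : ℝ, 0 < r → r < c →
      a * r ^ δ * |Real.log r| ^ e ≤ (∫ p in strip2 v r c, g p) ∧
      (∫ p in strip2 v r c, g p) ≤ b * r ^ δ * |Real.log r| ^ e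

/-- The set `l_H` of points within Euclidean distance `H` of the line `l = ℝ v`. -/
def lineNbhd (v : ℝ × ℝ) (H : ℝ) : Set (ℝ × ℝ) := {q | ∃ s : ℝ, nrm2 (q - s • v) ≤ H}

/-- The convolution kernel `K(t,u) = ∫ m(x,y) e^{i(tx+uy)} dx dy`. -/
def kernel2 (m : ℝ × ℝ → ℝ) (q : ℝ × ℝ) : ℂ :=
  ∫ p : ℝ × ℝ, (m p : ℂ) * Complex.exp (Complex.I * (dot2 q p : ℂ))

end

/-!
By nonnegativity no summand can cancel another. The restriction of `K` to the line `ℝ v` is the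
characteristic function of the law of `p ↦ p · v` under the density `m`. Averaging
`s ↦ exp (-i x s / r) K (s v / r)` against the standard Gaussian gives the integral of
`exp (-((p · v - x) / r) ^ 2 / 2)` against `m`, so a decay rate `|s| ^ (-δ)` of `K (s v)` bounds the
`m`-mass of every slab `|(p - z) · v| < r` by a multiple of `r ^ δ`, as long as `δ < 1` makes
`|s| ^ (-δ)` integrable at `0`. The slab through `z = z i₀` contains a strip on which
`m (z + p) ≥ c * g p`, and whose mass is therefore at least a multiple of `r ^ δv`. Hence `δ ≤ δv`.
Since `δv < 1`, a decay exponent `δ ≥ 1` may first be lowered into `(δv, 1)`.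
-/

section SmallBall

open ProbabilityTheory

lemma integral_charFun_comm {E : Type*} [NormedAddCommGroup E] [InnerProductSpace ℝ E]
    [MeasurableSpace E] [BorelSpace E] [SecondCountableTopology E]
    (μ ν : Measure E) [IsFiniteMeasure μ] [IsFiniteMeasure ν] :
    ∫ t, charFun μ t ∂ν = ∫ x, charFun ν x ∂μ := by
  have hint : Integrable (Function.uncurry fun t x : E => Complex.exp (inner ℝ x t * Complex.I))
      (ν.prod μ) :=
    .of_bound (Continuous.aestronglyMeasurable (by fun_prop)) 1
      (ae_of_all _ fun _ => (Complex.norm_exp_ofReal_mul_I _).le)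
  simp only [charFun_apply]
  rw [integral_integral_swap hint]
  simp only [real_inner_comm]

lemma integral_exp_neg_sq_div_two_eq (μ : Measure ℝ) [IsFiniteMeasure μ] :
    ((∫ x, Real.exp (-x ^ 2 / 2) ∂μ : ℝ) : ℂ) = ∫ s, charFun μ s ∂gaussianReal 0 1 := by
  rw [integral_charFun_comm, ← integral_complex_ofReal]
  congr with x
  rw [charFun_gaussianReal]
  push_cast
  congr 1
  ring

lemma exp_neg_half_mul_measureReal_ball_zero_one_le (μ : Measure ℝ) [IsFiniteMeasure μ] :
    Real.exp (-1 / 2) * μ.real (Metric.ball 0 1) ≤ ∫ s, ‖charFun μ s‖ ∂gaussianReal 0 1 := by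
  have hint : Integrable (fun x => Real.exp (-x ^ 2 / 2)) μ :=
    .of_bound (Continuous.aestronglyMeasurable (by fun_prop)) 1 (ae_of_all _ fun x => by
      rw [Real.norm_eq_abs, Real.abs_exp, Real.exp_le_one_iff]
      linarith [sq_nonneg x])
  have hball : ∀ x ∈ Metric.ball (0 : ℝ) 1, Real.exp (-1 / 2) ≤ Real.exp (-x ^ 2 / 2) := by
    intro x hx
    have hx2 : x ^ 2 ≤ 1 := (sq_le_one_iff_abs_le_one x).2 (mem_ball_zero_iff.1 hx).le
    gcongr
  calc Real.exp (-1 / 2) * μ.real (Metric.ball 0 1)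
      ≤ ∫ x in Metric.ball 0 1, Real.exp (-x ^ 2 / 2) ∂μ :=
        setIntegral_ge_of_const_le_real measurableSet_ball (measure_ne_top _ _) hball
          hint.integrableOn
    _ ≤ ∫ x, Real.exp (-x ^ 2 / 2) ∂μ :=
        setIntegral_le_integral hint (ae_of_all _ fun _ => (Real.exp_pos _).le)
    _ ≤ ‖((∫ x, Real.exp (-x ^ 2 / 2) ∂μ : ℝ) : ℂ)‖ := by
        rw [Complex.norm_real]
        exact le_abs_self _
    _ ≤ ∫ s, ‖charFun μ s‖ ∂gaussianReal 0 1 := by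
        rw [integral_exp_neg_sq_div_two_eq]
        exact norm_integral_le_integral_norm _

lemma exp_neg_half_mul_measureReal_ball_le (μ : Measure ℝ) [IsFiniteMeasure μ] (x : ℝ) {r : ℝ}
    (hr : 0 < r) :
    Real.exp (-1 / 2) * μ.real (Metric.ball x r) ≤
      ∫ s, ‖charFun μ (r⁻¹ * s)‖ ∂gaussianReal 0 1 := by
  set ν := (μ.map (· + -x)).map (r⁻¹ * ·) with hν
  have hball : ν.real (Metric.ball 0 1) = μ.real (Metric.ball x r) := by
    rw [hν, Measure.map_map (by fun_prop) (by fun_prop),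
      map_measureReal_apply (by fun_prop) measurableSet_ball]
    congr 1
    ext y
    rw [mem_preimage, Function.comp_apply, mem_ball_zero_iff, norm_mul, norm_inv,
      Real.norm_of_nonneg hr.le, inv_mul_lt_one₀ hr, ← sub_eq_add_neg, Metric.mem_ball,
      dist_eq_norm]
  have hchar (s : ℝ) : ‖charFun ν s‖ = ‖charFun μ (r⁻¹ * s)‖ := by
    rw [hν, charFun_map_mul, charFun_map_add_const, norm_mul, Complex.norm_exp_ofReal_mul_I,
      mul_one]
  simpa only [hball, hchar] using exp_neg_half_mul_measureReal_ball_zero_one_le ν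

lemma integrable_abs_rpow_gaussianReal {a : ℝ} (ha : -1 < a) :
    Integrable (fun s : ℝ => |s| ^ a) (gaussianReal 0 1) := by
  have hpdf : Integrable fun s : ℝ => |s| ^ a * Real.exp (-(1 / 2) * |s| ^ 2) := by
    have h := (integrable_fun_norm_addHaar (E := ℝ) volume
      (f := fun y : ℝ => y ^ a * Real.exp (-(1 / 2) * y ^ 2))).2 (by
        simpa using integrableOn_rpow_mul_exp_neg_mul_sq (b := 1 / 2) (by norm_num) ha)
    simpa using h
  rw [gaussianReal_of_var_ne_zero 0 one_ne_zero, integrable_withDensity_iff_integrable_smul'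
    (measurable_gaussianPDF 0 1) (ae_of_all _ fun _ => gaussianPDF_lt_top)]
  refine (hpdf.const_mul (√(2 * Real.pi))⁻¹).congr (ae_of_all _ fun s => ?_)
  simp only [toReal_gaussianPDF, gaussianPDFReal, smul_eq_mul, NNReal.coe_one, mul_one, sub_zero,
    sq_abs]
  rw [show -(1 / 2) * s ^ 2 = -s ^ 2 / 2 by ring]
  ring

theorem exists_measureReal_ball_le_of_charFun_decay (μ : Measure ℝ) [IsFiniteMeasure μ]
    {C δ : ℝ} (hδ : δ < 1) (hμ : ∀ s ≠ 0, ‖charFun μ s‖ ≤ C * |s| ^ (-δ)) :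
    ∃ D, ∀ x r, 0 < r → μ.real (Metric.ball x r) ≤ D * r ^ δ := by
  set M := ∫ s, |s| ^ (-δ) ∂gaussianReal 0 1
  refine ⟨C * M / Real.exp (-1 / 2), fun x r hr => ?_⟩
  have hscaled : ∀ s ≠ 0, ‖charFun μ (r⁻¹ * s)‖ ≤ C * r ^ δ * |s| ^ (-δ) := fun s hs =>
    calc ‖charFun μ (r⁻¹ * s)‖ ≤ C * |r⁻¹ * s| ^ (-δ) := hμ _ (by positivity)
      _ = C * r ^ δ * |s| ^ (-δ) := by
        rw [abs_mul, abs_of_pos (inv_pos.2 hr), Real.mul_rpow (by positivity) (abs_nonneg s),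
          Real.inv_rpow hr.le, ← Real.rpow_neg hr.le, neg_neg, mul_assoc]
  have := nullSingletonClass_gaussianReal (μ := 0) (v := 1) one_ne_zero
  have hmass : Real.exp (-1 / 2) * μ.real (Metric.ball x r) ≤ C * r ^ δ * M :=
    calc Real.exp (-1 / 2) * μ.real (Metric.ball x r)
        ≤ ∫ s, ‖charFun μ (r⁻¹ * s)‖ ∂gaussianReal 0 1 :=
          exp_neg_half_mul_measureReal_ball_le μ x hr
      _ ≤ ∫ s, C * r ^ δ * |s| ^ (-δ) ∂gaussianReal 0 1 :=
          integral_mono_of_nonneg (ae_of_all _ fun _ => norm_nonneg _)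
            ((integrable_abs_rpow_gaussianReal (neg_lt_neg hδ)).const_mul _)
            ((Measure.ae_ne _ 0).mono hscaled)
      _ = C * r ^ δ * M := integral_const_mul _ _
  rw [div_mul_eq_mul_div, le_div_iff₀ (Real.exp_pos _)]
  linarith

end SmallBall

section Density

variable {Ω : Type*} [MeasurableSpace Ω] {μ : Measure Ω} {m X : Ω → ℝ}

lemma charFun_map_withDensity_ofReal (hm : AEMeasurable m μ) (hm0 : ∀ ω, 0 ≤ m ω)
    (hX : Measurable X) (s : ℝ) :
    charFun ((μ.withDensity fun ω => ENNReal.ofReal (m ω)).map X) s =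
      ∫ ω, (m ω : ℂ) * Complex.exp (Complex.I * (s * X ω : ℝ)) ∂μ := by
  rw [charFun_apply, integral_map hX.aemeasurable (by fun_prop),
    integral_withDensity_eq_integral_toReal_smul₀ hm.ennreal_ofReal
      (ae_of_all _ fun _ => ENNReal.ofReal_lt_top)]
  congr with ω
  rw [ENNReal.toReal_ofReal (hm0 ω), Complex.real_smul, mul_comm Complex.I]
  rfl

lemma measureReal_ball_map_withDensity_ofReal (hm : Integrable m μ) (hm0 : ∀ ω, 0 ≤ m ω)
    (hX : Measurable X) (x r : ℝ) :
    ((μ.withDensity fun ω => ENNReal.ofReal (m ω)).map X).real (Metric.ball x r) =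
      ∫ ω in {ω | |X ω - x| < r}, m ω ∂μ := by
  rw [map_measureReal_apply hX measurableSet_ball, measureReal_def,
    withDensity_apply _ (hX measurableSet_ball),
    ← ofReal_integral_eq_lintegral_ofReal hm.integrableOn (ae_of_all _ hm0),
    ENNReal.toReal_ofReal (integral_nonneg hm0)]
  rfl

theorem exists_setIntegral_abs_sub_lt_le_of_decay (hm : Integrable m μ) (hm0 : ∀ ω, 0 ≤ m ω)
    (hX : Measurable X) {C δ : ℝ} (hδ : δ < 1)
    (hdecay : ∀ s : ℝ, s ≠ 0 →
      ‖∫ ω, (m ω : ℂ) * Complex.exp (Complex.I * (s * X ω : ℝ)) ∂μ‖ ≤ C * |s| ^ (-δ)) :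
    ∃ D, ∀ x r, 0 < r → ∫ ω in {ω | |X ω - x| < r}, m ω ∂μ ≤ D * r ^ δ := by
  have := isFiniteMeasure_withDensity_ofReal hm.hasFiniteIntegral
  simpa only [measureReal_ball_map_withDensity_ofReal hm hm0 hX] using
    exists_measureReal_ball_le_of_charFun_decay
      ((μ.withDensity fun ω => ENNReal.ofReal (m ω)).map X) hδ fun s hs => by
        simpa only [charFun_map_withDensity_ofReal hm.aemeasurable hm0 hX] using hdecay s hs

lemma integrable_of_integrableOn_translate {G : Type*} [AddGroup G] [MeasurableSpace G]
    [MeasurableAdd G] {ν : Measure G} [ν.IsAddLeftInvariant] {f : G → ℝ} {z : G} {U : Set G}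
    (hf : IntegrableOn (fun p => f (z + p)) U ν) (hU : ∀ p, f (z + p) ≠ 0 → p ∈ U) :
    Integrable f ν := by
  simpa using ((integrableOn_iff_integrable_of_support_subset hU).1 hf).comp_add_left (-z)

end Density

section Plane

variable {v : ℝ × ℝ}

lemma continuous_dot2_left (v : ℝ × ℝ) : Continuous fun p => dot2 p v := by
  unfold dot2
  fun_prop

lemma dot2_add_left (p q v : ℝ × ℝ) : dot2 (p + q) v = dot2 p v + dot2 q v := by
  simp only [dot2, Prod.fst_add, Prod.snd_add]
  ring

lemma dot2_smul_left (s : ℝ) (v p : ℝ × ℝ) : dot2 (s • v) p = s * dot2 p v := by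
  simp only [dot2, Prod.smul_fst, Prod.smul_snd, smul_eq_mul]
  ring

lemma nrm2_smul (s : ℝ) (v : ℝ × ℝ) : nrm2 (s • v) = |s| * nrm2 v := by
  rw [nrm2, nrm2, ← Real.sqrt_sq_eq_abs, ← Real.sqrt_mul (sq_nonneg s)]
  simp only [Prod.smul_fst, Prod.smul_snd, smul_eq_mul]
  ring_nf

lemma dot2_sq_add_dot2_perp2_sq (p : ℝ × ℝ) (hv : nrm2 v = 1) :
    dot2 p v ^ 2 + dot2 p (perp2 v) ^ 2 = p.1 ^ 2 + p.2 ^ 2 := by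
  have hsq : v.1 ^ 2 + v.2 ^ 2 = 1 := Real.sqrt_eq_one.1 hv
  simp only [dot2, perp2]
  linear_combination (p.1 ^ 2 + p.2 ^ 2) * hsq

lemma isOpen_strip2 (v : ℝ × ℝ) (r c : ℝ) : IsOpen (strip2 v r c) :=
  (isOpen_lt (continuous_dot2_left v).abs continuous_const).inter
    (isOpen_lt (continuous_dot2_left (perp2 v)).abs continuous_const)

lemma norm_lt_of_mem_strip2 (hv : nrm2 v = 1) {r c : ℝ} {p : ℝ × ℝ} (hp : p ∈ strip2 v r c) :
    ‖p‖ < r + c := by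
  obtain ⟨hr, hc⟩ := hp
  have hlt : p.1 ^ 2 + p.2 ^ 2 < (r + c) ^ 2 := by
    rw [← dot2_sq_add_dot2_perp2_sq p hv, ← sq_abs (dot2 p v), ← sq_abs (dot2 p (perp2 v))]
    nlinarith [abs_nonneg (dot2 p v), abs_nonneg (dot2 p (perp2 v))]
  have hrc : 0 ≤ r + c := by linarith [abs_nonneg (dot2 p v), abs_nonneg (dot2 p (perp2 v))]
  rw [Prod.norm_def, max_lt_iff]
  exact ⟨abs_lt_of_sq_lt_sq (by linarith [sq_nonneg p.2]) hrc,
    abs_lt_of_sq_lt_sq (by linarith [sq_nonneg p.1]) hrc⟩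

lemma span_singleton_subset_lineNbhd (v : ℝ × ℝ) {H : ℝ} (hH : 0 ≤ H) :
    ((ℝ ∙ v : Submodule ℝ (ℝ × ℝ)) : Set (ℝ × ℝ)) ⊆ lineNbhd v H := by
  intro q hq
  obtain ⟨s, rfl⟩ := Submodule.mem_span_singleton.1 hq
  exact ⟨s, by simpa [nrm2] using hH⟩

lemma mul_setIntegral_strip2_le {m g : ℝ × ℝ → ℝ} (hm : Integrable m) (hm0 : ∀ p, 0 ≤ m p)
    {z : ℝ × ℝ} {r c κ : ℝ} (hg : IntegrableOn g (strip2 v r c))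
    (hle : ∀ᵐ p : ℝ × ℝ, p ∈ strip2 v r c → κ * g p ≤ m (z + p)) :
    κ * ∫ p in strip2 v r c, g p ≤ ∫ p in {p | |dot2 p v - dot2 z v| < r}, m p := by
  have hmz : Integrable fun p => m (z + p) := hm.comp_add_left z
  have hpre : (z + ·) ⁻¹' {p | |dot2 p v - dot2 z v| < r} = {p | |dot2 p v| < r} := by
    ext p
    simp only [mem_preimage, mem_ofPred_eq, dot2_add_left, add_sub_cancel_left]
  calc κ * ∫ p in strip2 v r c, g p
      = ∫ p in strip2 v r c, κ * g p := (integral_const_mul _ _).symm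
    _ ≤ ∫ p in strip2 v r c, m (z + p) :=
        setIntegral_mono_on_ae (hg.const_mul κ) hmz.integrableOn
          (isOpen_strip2 v r c).measurableSet hle
    _ ≤ ∫ p in {p | |dot2 p v| < r}, m (z + p) :=
        setIntegral_mono_set hmz.integrableOn (ae_of_all _ fun p => hm0 _)
          (LE.le.eventuallyLE fun _ hp => hp.1)
    _ = ∫ p in {p | |dot2 p v - dot2 z v| < r}, m p := by
        rw [← hpre]
        exact (measurePreserving_add_left volume z).setIntegral_preimage_emb
          (measurableEmbedding_addLeft z) m _

end Plane

section StripExponent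

variable {m g : ℝ × ℝ → ℝ} {v : ℝ × ℝ} {δv : ℝ} {ev : ℕ}

lemma IsStripExponent.exists_mul_rpow_le_setIntegral (hstrip : IsStripExponent g v δv ev)
    (hv : nrm2 v = 1) {V : Set (ℝ × ℝ)} (hV : V ∈ 𝓝 0) :
    ∃ c a : ℝ, 0 < a ∧ ∀ᶠ r in 𝓝[>] (0 : ℝ),
      strip2 v r c ⊆ V ∧ a * r ^ δv ≤ ∫ p in strip2 v r c, g p := by
  obtain ⟨-, -, cv, hcv, hcomp⟩ := hstrip
  obtain ⟨ρ, hρ, hρV⟩ := Metric.mem_nhds_iff.1 hV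
  obtain ⟨c, hc0, hc⟩ := exists_between (lt_min hcv (half_pos hρ))
  obtain ⟨hccv, hcρ⟩ := lt_min_iff.1 hc
  obtain ⟨a, ha, _, _, hab⟩ := hcomp c hc0 hccv
  refine ⟨c, a, ha, ?_⟩
  -- For `r < e⁻¹` the logarithmic factor is at least `1` and can be dropped.
  filter_upwards [Ioo_mem_nhdsGT hc0, Ioo_mem_nhdsGT (Real.exp_pos (-1))] with r hrc hre
  refine ⟨fun p hp => hρV (mem_ball_zero_iff.2 ?_), ?_⟩
  · linarith [norm_lt_of_mem_strip2 hv hp, hrc.2]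
  have hlog : 1 ≤ |Real.log r| := by
    rw [le_abs']
    exact .inl ((Real.log_le_iff_le_exp hre.1).2 hre.2.le)
  have hpow : 0 < r ^ δv := Real.rpow_pos_of_pos hrc.1 _
  calc a * r ^ δv ≤ a * r ^ δv * |Real.log r| ^ ev :=
        le_mul_of_one_le_right (by positivity) (one_le_pow₀ hlog)
    _ ≤ ∫ p in strip2 v r c, g p := (hab r hrc.1 hrc.2).1

lemma le_of_eventually_mul_rpow_le {a D δ₀ δ : ℝ} (ha : 0 < a)
    (h : ∀ᶠ r in 𝓝[>] (0 : ℝ), a * r ^ δ₀ ≤ D * r ^ δ) : δ ≤ δ₀ := by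
  by_contra! hδ
  have hlim : Tendsto (fun r : ℝ => D * r ^ (δ - δ₀)) (𝓝[>] 0) (𝓝 0) := by
    have := (Real.continuousAt_rpow_const 0 (δ - δ₀) (.inr (sub_nonneg.2 hδ.le))).tendsto
    rw [Real.zero_rpow (sub_pos.2 hδ).ne'] at this
    simpa using (this.mono_left nhdsWithin_le_nhds).const_mul D
  refine ha.not_ge (ge_of_tendsto hlim ?_)
  filter_upwards [h, self_mem_nhdsWithin] with r hr hr0
  rwa [Real.rpow_sub hr0, ← mul_div_assoc, le_div_iff₀ (Real.rpow_pos_of_pos hr0 _)]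

lemma two_add_rpow_neg_le {t δ' δ : ℝ} (ht : 0 < t) (hδ' : 0 ≤ δ') (hδ : δ' ≤ δ) :
    (2 + t) ^ (-δ) ≤ t ^ (-δ') :=
  calc (2 + t) ^ (-δ) ≤ (2 + t) ^ (-δ') :=
        Real.rpow_le_rpow_of_exponent_le (by linarith) (neg_le_neg hδ)
    _ ≤ t ^ (-δ') := Real.rpow_le_rpow_of_nonpos ht (by linarith) (neg_nonpos.2 hδ')

theorem IsStripExponent.le_of_kernel2_decay (hstrip : IsStripExponent g v δv ev)
    (hv : nrm2 v = 1) (hm : Integrable m) (hm0 : ∀ p, 0 ≤ m p) {z : ℝ × ℝ} {c : ℝ} (hc : 0 < c)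
    (hdom : ∀ᶠ p in 𝓝 0 ⊓ ae volume, c * g p ≤ m (z + p)) {C δ : ℝ} (hδ : δ < 1)
    (hK : ∀ s : ℝ, s ≠ 0 → ‖kernel2 m (s • v)‖ ≤ C * |s| ^ (-δ)) : δ ≤ δv := by
  obtain ⟨D, hD⟩ := exists_setIntegral_abs_sub_lt_le_of_decay hm hm0
    (continuous_dot2_left v).measurable hδ fun s hs => by
      simpa only [kernel2, dot2_smul_left] using hK s hs
  obtain ⟨V, hV, T, hT, hVT⟩ := eventually_inf.1 hdom
  obtain ⟨c', a, ha, hlow⟩ := hstrip.exists_mul_rpow_le_setIntegral hv hV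
  refine le_of_eventually_mul_rpow_le (D := D) (mul_pos hc ha) ?_
  filter_upwards [hlow, self_mem_nhdsWithin] with r ⟨hstripV, hmass⟩ hr
  -- `g` is integrable on the strip, since otherwise its integral would be `0`.
  have hmass_pos : 0 < ∫ p in strip2 v r c', g p :=
    (mul_pos ha (Real.rpow_pos_of_pos hr _)).trans_le hmass
  calc c * a * r ^ δv = c * (a * r ^ δv) := mul_assoc _ _ _
    _ ≤ c * ∫ p in strip2 v r c', g p := mul_le_mul_of_nonneg_left hmass hc.le
    _ ≤ ∫ p in {p | |dot2 p v - dot2 z v| < r}, m p :=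
        mul_setIntegral_strip2_le hm hm0 (.of_integral_ne_zero hmass_pos.ne')
          (Eventually.mono hT fun p hpT hp => hVT p ⟨hstripV hp, hpT⟩)
    _ ≤ D * r ^ δ := hD _ r hr

theorem kernel_sum_sharp_general {ι : Type*} [Fintype ι] {mi : ι → ℝ × ℝ → ℝ}
    (hsum : ∀ p, m p = ∑ i, mi i p) (hint : ∀ i, Integrable (mi i)) (hnn : ∀ i p, 0 ≤ mi i p)
    (i₀ : ι) {z : ℝ × ℝ} {c : ℝ} (hc : 0 < c)
    (hdom : ∀ᶠ p in 𝓝 0 ⊓ ae volume, c * g p ≤ mi i₀ (z + p))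
    (hv : nrm2 v = 1) (hstrip : IsStripExponent g v δv ev) (hδv : δv < 1) {δ : ℝ} (hδ : δv < δ) :
    ¬ ∃ C : ℝ, ∀ q ∈ ℝ ∙ v, ‖kernel2 m q‖ ≤ C * (2 + nrm2 q) ^ (-δ) := by
  rintro ⟨C, hC⟩
  have hm : Integrable m := by
    rw [funext hsum]
    exact integrable_finsetSum _ fun i _ => hint i
  have hm0 (p : ℝ × ℝ) : 0 ≤ m p := hsum p ▸ Finset.sum_nonneg fun i _ => hnn i p
  have hle (p : ℝ × ℝ) : mi i₀ p ≤ m p :=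
    hsum p ▸ Finset.single_le_sum (f := fun i => mi i p) (fun i _ => hnn i p) (Finset.mem_univ i₀)
  obtain ⟨δ', hδvδ', hδ'⟩ := exists_between (lt_min hδ hδv)
  obtain ⟨hδ'δ, hδ'1⟩ := lt_min_iff.1 hδ'
  have hδ'0 : 0 < δ' := hstrip.1.trans hδvδ'
  have hdecay (s : ℝ) (hs : s ≠ 0) : ‖kernel2 m (s • v)‖ ≤ |C| * |s| ^ (-δ') :=
    calc ‖kernel2 m (s • v)‖ ≤ C * (2 + nrm2 (s • v)) ^ (-δ) :=
          hC _ (Submodule.smul_mem _ s (Submodule.mem_span_singleton_self v))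
      _ = C * (2 + |s|) ^ (-δ) := by rw [nrm2_smul, hv, mul_one]
      _ ≤ |C| * |s| ^ (-δ') := by
          gcongr
          · exact le_abs_self C
          · exact two_add_rpow_neg_le (abs_pos.2 hs) hδ'0.le hδ'δ.le
  exact hδvδ'.not_ge (hstrip.le_of_kernel2_decay hv hm hm0 hc
    (hdom.mono fun p hp => hp.trans (hle _)) hδ'1 hdecay)

end StripExponent

section StandardForm

variable {U E : Set (ℝ × ℝ)} {n : ℕ} {f : Fin n → ℝ × ℝ → ℝ} {γ : Fin n → ℝ}
  {α g h : ℝ × ℝ → ℝ} {z : ℝ × ℝ}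

lemma mul_stdFun_le_mul_stdFun {a b : ℝ} {p : ℝ × ℝ} (hab : p ∈ E → a ≤ b) :
    a * stdFun n f γ E p ≤ b * stdFun n f γ E p := by
  by_cases hp : p ∈ E
  · have hnn : 0 ≤ stdFun n f γ E p :=
      indicator_nonneg (fun _ _ => Finset.prod_nonneg fun _ _ => by positivity) p
    exact mul_le_mul_of_nonneg_right (hab hp) hnn
  · simp only [stdFun, indicator_of_notMem hp, mul_zero, le_refl]

lemma eventually_mul_stdFun_le {c : ℝ} (hU : U ∈ 𝓝 0)
    (hform : ∀ᵐ p : ℝ × ℝ, p ∈ U → h (z + p) = α p * stdFun n f γ E p)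
    (hαc : ∀ᶠ p in 𝓝[≠] (0 : ℝ × ℝ), p ∈ E → c < α p) :
    ∀ᶠ p in 𝓝 0 ⊓ ae volume, c * stdFun n f γ E p ≤ h (z + p) := by
  filter_upwards [Eventually.filter_mono inf_le_left hU,
    (eventually_nhdsWithin_iff.1 hαc).filter_mono inf_le_left,
    hform.filter_mono inf_le_right,
    (Measure.ae_ne volume 0).filter_mono inf_le_right] with p hpU hpα hp hp0
  rw [hp hpU]
  exact mul_stdFun_le_mul_stdFun fun hpE => (hpα hp0 hpE).le

lemma AlphaBoundOn.integrableOn_mul {A : ℝ} (hα : AlphaBoundOn U α A) (hU : MeasurableSet U)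
    (hg : IntegrableOn g U) : IntegrableOn (fun p => α p * g p) U := by
  have hU0 : MeasurableSet (U \ {0}) := hU.diff (measurableSet_singleton 0)
  have hpunctured : IntegrableOn (fun p => α p * g p) (U \ {0}) :=
    Integrable.bdd_mul (c := A) (hg.mono_set sdiff_subset)
      (hα.1.continuousOn.aestronglyMeasurable hU0)
      (ae_restrict_of_forall_mem hU0 fun p hp => (hα.2 p hp).1)
  exact hpunctured.congr_set_ae (sdiff_null_ae_eq_self (measure_singleton 0)).symm

lemma AlphaBoundOn.integrable_of_translate_eq_mul {A : ℝ} (hα : AlphaBoundOn U α A)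
    (hU : MeasurableSet U) (hg : IntegrableOn g U) (hsupp : ∀ p, h (z + p) ≠ 0 → p ∈ U)
    (hform : ∀ᵐ p : ℝ × ℝ, p ∈ U → h (z + p) = α p * g p) : Integrable h := by
  have hαg : (fun p => α p * g p) =ᵐ[volume.restrict U] fun p => h (z + p) :=
    (ae_restrict_iff' hU).2 (hform.mono fun p hp hpU => (hp hpU).symm)
  exact integrable_of_integrableOn_translate ((hα.integrableOn_mul hU hg).congr hαg) hsupp

end StandardForm

theorem kernel_sum_sharp (K : ℕ) (m : ℝ × ℝ → ℝ) (mi : Fin K → ℝ × ℝ → ℝ)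
    (hsum : ∀ p, m p = ∑ i, mi i p)
    (hcpt : ∀ i, HasCompactSupport (mi i)) (hnn : ∀ i p, 0 ≤ mi i p)
    (z : Fin K → ℝ × ℝ) (U : Fin K → Set (ℝ × ℝ)) (n : Fin K → ℕ)
    (f : (i : Fin K) → Fin (n i) → ℝ × ℝ → ℝ) (γ : (i : Fin K) → Fin (n i) → ℝ)
    (E : Fin K → Set (ℝ × ℝ)) (α : Fin K → ℝ × ℝ → ℝ) (A : ℝ)
    (hstd : ∀ i, StandardFormOn (U i) (n i) (f i) (γ i) (E i))
    (hα : ∀ i, AlphaBoundOn (U i) (α i) A)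
    (hsupp : ∀ i p, z i + p ∈ tsupport (mi i) → p ∈ U i)
    (hform : ∀ i, ∀ᵐ p : ℝ × ℝ, p ∈ U i →
      mi i (z i + p) = α i p * stdFun (n i) (f i) (γ i) (E i) p)
    (i₀ : Fin K) (c : ℝ) (hc : 0 < c)
    (hαc : ∀ᶠ p in 𝓝[≠] (0 : ℝ × ℝ), p ∈ E i₀ → c < α i₀ p)
    (v : ℝ × ℝ) (hv : nrm2 v = 1) (δv : ℝ) (ev : ℕ)
    (hstrip : IsStripExponent (stdFun (n i₀) (f i₀) (γ i₀) (E i₀)) v δv ev)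
    (hδv : δv < 1) (H : ℝ) (hH : 0 < H) (δ : ℝ) (hδ : δv < δ) :
    ¬ ∃ C : ℝ, ∀ q ∈ lineNbhd v H, ‖kernel2 m q‖ ≤ C * (2 + nrm2 q) ^ (-δ) := fun ⟨C, hC⟩ =>
  kernel_sum_sharp_general hsum
    (fun i => (hα i).integrable_of_translate_eq_mul (hstd i).isOpen.measurableSet
      (hstd i).integrable (fun p hp => hsupp i p (subset_tsupport _ hp)) (hform i))
    hnn i₀ hc
    (eventually_mul_stdFun_le ((hstd i₀).isOpen.mem_nhds (hstd i₀).zero_mem) (hform i₀) hαc)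
    hv hstrip hδv hδ ⟨C, fun q hq => hC q (span_singleton_subset_lineNbhd v hH.le hq)⟩
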